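/- arXiv:1609.07027 — 2 statements merged into one kernel-verified Lean document; each statement's English description precedes it below -/
import Mathlib

section
/- Let n ≥ 2 and R ≥ 1 be integers with (n−1) dividing R, and let k ≥ R/(n−1) + 1. Then the minimum download complexity over all n-server PIR schemes for a database of k records of R bits each is exactly (n/(n−1))·R: every such scheme has download complexity at least (n/(n−1))·R, and there exists such a scheme with download complexity exactly (n/(n−1))·R. -/
open scoped ENNReal

/-- An `n`-server PIR scheme for a database of `k` records of `R` bits each. -/
structure PIRScheme (n k R : ℕ) where
  /-- The query set for each server. -/
  Q : Fin n → Type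
  /-- Each query set is finite. -/
  fintypeQ : ∀ r, Fintype (Q r)
  /-- The storage size (in bits) of each server. -/
  s : Fin n → ℕ
  /-- The encoding map of each server. -/
  E : (r : Fin n) → (Fin k → Fin R → Bool) → (Fin (s r) → Bool)
  /-- For each record index `ℓ`, a probability distribution on query tuples. -/
  D : Fin k → PMF ((r : Fin n) → Q r)
  /-- The response length of each server on each query. -/
  d : (r : Fin n) → Q r → ℕ
  /-- The deterministic response map of each server. -/
  resp : (r : Fin n) → (q : Q r) → (Fin (s r) → Bool) → (Fin (d r q) → Bool)
  /-- The reconstruction function. -/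
  recon : (ℓ : Fin k) → (q : (r : Fin n) → Q r) →
    ((r : Fin n) → (Fin (d r (q r)) → Bool)) → (Fin R → Bool)
  /-- Correctness. -/
  correct : ∀ (X : Fin k → Fin R → Bool) (ℓ : Fin k) (q : (r : Fin n) → Q r),
    q ∈ (D ℓ).support →
    recon ℓ q (fun r => resp r (q r) (E r X)) = X ℓ
  /-- Privacy: the marginal of each query component does not depend on `ℓ`. -/
  privacy : ∀ (r : Fin n) (ℓ ℓ' : Fin k),
    (D ℓ).map (fun q => q r) = (D ℓ').map (fun q => q r)

attribute [instance] PIRScheme.fintypeQ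

/-- A query tuple is possible if it lies in the support of `D ℓ` for some `ℓ`. -/
def PIRScheme.Possible {n k R : ℕ} (S : PIRScheme n k R)
    (q : (r : Fin n) → S.Q r) : Prop :=
  ∃ ℓ, q ∈ (S.D ℓ).support

/-- The download complexity: the maximum, over possible query tuples, of the
total number of downloaded bits. -/
noncomputable def PIRScheme.downloadComplexity {n k R : ℕ} (S : PIRScheme n k R) : ℕ :=
  letI : DecidablePred S.Possible := Classical.decPred _
  (Finset.univ.filter S.Possible).sup (fun q => ∑ r, S.d r (q r))

/-!
For the lower bound, give a function of the database the entropy obtained by averaging, over all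
databases, the logarithm of the number of values it takes when only the records in a set `s` vary.
The answers to a query tuple for record `ℓ` determine that record, so by Jensen's inequality the
entropy of the joint answer when `s ∪ {ℓ}` varies exceeds by at least `R` bits the entropy of any
one server's answer when only `s` varies. By subadditivity some server carries at least a `1 / n`
share of the entropy of a joint answer, and by privacy its query also occurs in a query tuple for
any other record. Freeing the records one by one thus yields the bound
`R (1 + 1 / n + ⋯ + 1 / n ^ (k - 1))`, which exceeds `n R / (n - 1) - 1` as soon as
`n R / (n - 1) < n ^ k`; integrality of the download does the rest.

For the upper bound, cut each record into `n - 1` blocks and add a zero block. Server `r` returns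
the sum of one block of each record, the chosen blocks being uniformly random and, for the desired
record only, shifted cyclically by `r`. The shifts run through all `n` blocks of the desired record
while the other summands stay fixed, so subtracting the answer with the zero block reveals it.
-/

section HartleyEntropy

open Finset
open scoped BigOperators

variable {ι V β : Type*}

/-- The values of `g` on the databases that agree with `X` outside `s`. Databases are functions
from a type `ι` of record indices to a type `V` of possible records. -/
def reachableValues (s : Finset ι) (g : (ι → V) → β) (X : ι → V) : Set β :=
  g '' {Y | ∀ i ∉ s, Y i = X i}

section Finite

variable [Finite ι] [Finite V]

theorem finite_reachableValues (s : Finset ι) (g : (ι → V) → β) (X : ι → V) :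
    (reachableValues s g X).Finite :=
  (Set.toFinite _).image g

theorem ncard_reachableValues_pos (s : Finset ι) (g : (ι → V) → β) (X : ι → V) :
    0 < (reachableValues s g X).ncard :=
  (Set.ncard_pos (finite_reachableValues s g X)).2 ⟨g X, X, fun _ _ ↦ rfl, rfl⟩

theorem ncard_reachableValues_comp_le {γ : Type*} (s : Finset ι) (g : (ι → V) → β) (φ : β → γ)
    (X : ι → V) : (reachableValues s (φ ∘ g) X).ncard ≤ (reachableValues s g X).ncard := by
  rw [reachableValues, Set.image_comp]
  exact Set.ncard_image_le (finite_reachableValues s g X)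

theorem ncard_reachableValues_pi_le_prod {κ : Type*} [Fintype κ] {β : κ → Type*} (s : Finset ι)
    (g : (ι → V) → ∀ r, β r) (X : ι → V) :
    (reachableValues s g X).ncard ≤ ∏ r, (reachableValues s (fun Y ↦ g Y r) X).ncard := by
  let box : Set (∀ r, β r) := Set.univ.pi fun r ↦ reachableValues s (fun Y ↦ g Y r) X
  have hsub : reachableValues s g X ⊆ box := by
    rintro _ ⟨Y, hY, rfl⟩ r -
    exact ⟨Y, hY, rfl⟩
  calc (reachableValues s g X).ncard ≤ box.ncard :=
        Set.ncard_le_ncard hsub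
          (Set.Finite.pi fun r ↦ finite_reachableValues s (fun Y ↦ g Y r) X)
    _ = ∏ r, (reachableValues s (fun Y ↦ g Y r) X).ncard := by
        rw [← Nat.card_coe_set_eq, Nat.card_congr (Equiv.Set.univPi _), Nat.card_pi]
        simp only [Nat.card_coe_set_eq]

end Finite

theorem sum_ncard_reachableValues_update_le [Finite ι] [Fintype V] [DecidableEq ι]
    {s : Finset ι} {l : ι} (hl : l ∉ s) {g : (ι → V) → β}
    (hg : (fun Y ↦ Y l).FactorsThrough g) (X : ι → V) :
    ∑ x, (reachableValues s g (Function.update X l x)).ncard ≤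
      (reachableValues (insert l s) g X).ncard := by
  have hdisj : Pairwise
      (Function.onFun Disjoint fun x ↦ reachableValues s g (Function.update X l x)) := by
    refine fun x y hxy ↦ Set.disjoint_left.2 ?_
    rintro _ ⟨Y, hY, rfl⟩ ⟨Z, hZ, hZY⟩
    refine hxy ?_
    calc x = Y l := by simp [hY l hl]
      _ = Z l := (hg hZY).symm
      _ = y := by simp [hZ l hl]
  rw [← finsum_eq_sum_of_fintype,
    ← Set.ncard_iUnion_of_finite (fun _ ↦ finite_reachableValues s g _) hdisj]
  refine Set.ncard_le_ncard (Set.iUnion_subset fun x ↦ ?_) (finite_reachableValues _ g X)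
  rintro _ ⟨Y, hY, rfl⟩
  refine ⟨Y, fun i hi ↦ ?_, rfl⟩
  rw [mem_insert, not_or] at hi
  rw [hY i hi.2, Function.update_of_ne hi.1]

variable [Fintype ι] [DecidableEq ι] [Fintype V]

/-- The average conditional Hartley entropy, in nats, of `g` given the records outside `s`. -/
noncomputable def hartleyEntropy (s : Finset ι) (g : (ι → V) → β) : ℝ :=
  𝔼 X, Real.log (reachableValues s g X).ncard

theorem hartleyEntropy_nonneg (s : Finset ι) (g : (ι → V) → β) : 0 ≤ hartleyEntropy s g :=
  expect_nonneg fun _ _ ↦ Real.log_natCast_nonneg _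

theorem hartleyEntropy_comp_le {γ : Type*} (s : Finset ι) (g : (ι → V) → β) (φ : β → γ) :
    hartleyEntropy s (φ ∘ g) ≤ hartleyEntropy s g := by
  refine expect_le_expect fun X _ ↦ ?_
  have hpos := ncard_reachableValues_pos s (φ ∘ g) X
  gcongr
  exact ncard_reachableValues_comp_le s g φ X

theorem hartleyEntropy_le_log_card [Nonempty V] [Finite β] (s : Finset ι) (g : (ι → V) → β) :
    hartleyEntropy s g ≤ Real.log (Nat.card β) := by
  refine expect_le univ_nonempty fun X _ ↦ ?_
  have hpos := ncard_reachableValues_pos s g X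
  gcongr
  exact Set.ncard_le_card _

section Pi

variable {κ : Type*} [Fintype κ] {β : κ → Type*}

theorem hartleyEntropy_pi_le_sum (s : Finset ι) (g : (ι → V) → ∀ r, β r) :
    hartleyEntropy s g ≤ ∑ r, hartleyEntropy s (fun Y ↦ g Y r) := by
  simp only [hartleyEntropy]
  rw [← expect_sum_comm]
  refine expect_le_expect fun X _ ↦ ?_
  have hpos := ncard_reachableValues_pos s g X
  rw [← Real.log_prod fun r _ ↦ by exact_mod_cast (ncard_reachableValues_pos s _ X).ne']
  gcongr
  exact_mod_cast ncard_reachableValues_pi_le_prod s g X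

theorem exists_hartleyEntropy_div_card_le [Nonempty κ] (s : Finset ι) (g : (ι → V) → ∀ r, β r) :
    ∃ r, hartleyEntropy s g / Fintype.card κ ≤ hartleyEntropy s (fun Y ↦ g Y r) := by
  have hmean : hartleyEntropy s g / Fintype.card κ ≤ 𝔼 r, hartleyEntropy s (fun Y ↦ g Y r) := by
    rw [Fintype.expect_eq_sum_div_card]
    gcongr
    exact hartleyEntropy_pi_le_sum s g
  simpa using exists_le_of_le_expect univ_nonempty hmean

end Pi

theorem log_card_add_expect_log_le_log_sum {α : Type*} [Fintype α] [Nonempty α] {a : α → ℝ}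
    (ha : ∀ x, 0 < a x) :
    Real.log (Fintype.card α) + 𝔼 x, Real.log (a x) ≤ Real.log (∑ x, a x) := by
  have hcard : (Fintype.card α : ℝ) ≠ 0 := by positivity
  have hsum : 0 < ∑ x, a x := sum_pos (fun x _ ↦ ha x) univ_nonempty
  have hjensen := strictConcaveOn_log_Ioi.concaveOn.le_map_sum (t := univ)
    (w := fun _ ↦ (Fintype.card α : ℝ)⁻¹) (fun _ _ ↦ by positivity) (by simp [hcard])
    fun x _ ↦ ha x
  simp only [smul_eq_mul, ← mul_sum] at hjensen
  rw [Real.log_mul (inv_ne_zero hcard) hsum.ne', Real.log_inv] at hjensen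
  rw [Fintype.expect_eq_sum_div_card, div_eq_inv_mul]
  linarith

theorem expect_expect_update [Nonempty V] (l : ι) (F : (ι → V) → ℝ) :
    𝔼 X, 𝔼 x, F (Function.update X l x) = 𝔼 X, F X := by
  calc 𝔼 X, 𝔼 x, F (Function.update X l x)
      = 𝔼 p : (ι → V) × V, F (Function.update p.1 l p.2) :=
        (expect_product univ univ fun p : (ι → V) × V ↦ F (Function.update p.1 l p.2)).symm
    _ = 𝔼 p : (ι → V) × V, F p.1 := by
        -- Exchanging the new value with the one it overwrites is an involution.
        refine expect_bij' (fun p _ ↦ (Function.update p.1 l p.2, p.1 l))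
          (fun p _ ↦ (Function.update p.1 l p.2, p.1 l)) ?_ ?_ ?_ ?_ ?_ <;> simp
    _ = 𝔼 X, 𝔼 _x : V, F X := expect_product univ univ fun p : (ι → V) × V ↦ F p.1
    _ = 𝔼 X, F X := by simp only [Fintype.expect_const]

theorem log_card_add_hartleyEntropy_le [Nonempty V] {s : Finset ι} {l : ι} (hl : l ∉ s)
    {g : (ι → V) → β} (hg : (fun Y ↦ Y l).FactorsThrough g) :
    Real.log (Fintype.card V) + hartleyEntropy s g ≤ hartleyEntropy (insert l s) g := by
  have hpos (Y : ι → V) : (0 : ℝ) < (reachableValues s g Y).ncard := by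
    exact_mod_cast ncard_reachableValues_pos s g Y
  calc Real.log (Fintype.card V) + hartleyEntropy s g
      = 𝔼 X, (Real.log (Fintype.card V) +
          𝔼 x, Real.log (reachableValues s g (Function.update X l x)).ncard) := by
        rw [expect_add_distrib, Fintype.expect_const,
          expect_expect_update l fun X ↦ Real.log (reachableValues s g X).ncard, hartleyEntropy]
    _ ≤ 𝔼 X, Real.log (∑ x, ((reachableValues s g (Function.update X l x)).ncard : ℝ)) :=
        expect_le_expect fun X _ ↦ log_card_add_expect_log_le_log_sum fun x ↦ hpos _
    _ ≤ hartleyEntropy (insert l s) g := by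
        refine expect_le_expect fun X _ ↦ Real.log_le_log ?_ ?_
        · exact sum_pos (fun x _ ↦ hpos _) univ_nonempty
        · exact_mod_cast sum_ncard_reachableValues_update_le hl hg X

end HartleyEntropy

theorem sum_apply_add_single_sub {ι G A : Type*} [Fintype ι] [DecidableEq ι] [AddCommGroup G]
    [AddCommGroup A] (f : ι → G → A) (v : ι → G) (l : ι) (a b : G) :
    ∑ i, f i ((v + Pi.single l a : ι → G) i) - ∑ i, f i ((v + Pi.single l b : ι → G) i) =
      f l (v l + a) - f l (v l + b) := by
  rw [← Finset.sum_sub_distrib, Fintype.sum_eq_single l fun i hi ↦ by simp [hi]]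
  simp

theorem map_uniformOfFintype_equiv {α : Type*} [Fintype α] [Nonempty α]
    {β : Type*} [Fintype β] [Nonempty β] (e : α ≃ β) :
    (PMF.uniformOfFintype α).map e = PMF.uniformOfFintype β := by
  ext a
  rw [PMF.map_apply, tsum_eq_single (e.symm a)]
  · simp [Fintype.card_congr e]
  · intro b hb
    rw [if_neg]
    rintro rfl
    simp at hb

namespace PIRScheme

open Finset

section LowerBound

variable {n k R : ℕ} (S : PIRScheme n k R)

/-- The responses to the query tuple `q`, as a function of the database. -/
def answers (q : (r : Fin n) → S.Q r) (X : Fin k → Fin R → Bool) (r : Fin n) :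
    Fin (S.d r (q r)) → Bool :=
  S.resp r (q r) (S.E r X)

variable {S}

theorem sum_le_downloadComplexity {q : (r : Fin n) → S.Q r} (hq : S.Possible q) :
    ∑ r, S.d r (q r) ≤ S.downloadComplexity := by
  classical
  exact le_sup (f := fun q : (r : Fin n) → S.Q r ↦ ∑ r, S.d r (q r)) (by simpa using hq)

theorem downloadComplexity_le {b : ℕ} (h : ∀ q, S.Possible q → ∑ r, S.d r (q r) ≤ b) :
    S.downloadComplexity ≤ b := by
  classical
  exact Finset.sup_le fun q hq ↦ h q (by simpa using hq)

theorem exists_mem_support_apply_eq {l : Fin k} {q : (r : Fin n) → S.Q r}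
    (hq : q ∈ (S.D l).support) (l' : Fin k) (r : Fin n) :
    ∃ q' ∈ (S.D l').support, q' r = q r := by
  have h : q r ∈ ((S.D l).map fun q ↦ q r).support :=
    (PMF.mem_support_map_iff _ _ _).2 ⟨q, hq, rfl⟩
  rwa [S.privacy r l l', PMF.mem_support_map_iff] at h

theorem factorsThrough_answers {l : Fin k} {q : (r : Fin n) → S.Q r}
    (hq : q ∈ (S.D l).support) : (fun X ↦ X l).FactorsThrough (S.answers q) := by
  intro X Y hXY
  calc X l = S.recon l q (S.answers q X) := (S.correct X l q hq).symm
    _ = S.recon l q (S.answers q Y) := by rw [hXY]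
    _ = Y l := S.correct Y l q hq

theorem add_hartleyEntropy_answers_apply_le {l : Fin k} {q : (r : Fin n) → S.Q r}
    (hq : q ∈ (S.D l).support) {s : Finset (Fin k)} (hl : l ∉ s) (r : Fin n) :
    R * Real.log 2 + hartleyEntropy s (fun X ↦ S.answers q X r) ≤
      hartleyEntropy (insert l s) (S.answers q) := by
  have hstep := log_card_add_hartleyEntropy_le hl (factorsThrough_answers hq)
  have hproj : hartleyEntropy s (fun X ↦ S.answers q X r) ≤ hartleyEntropy s (S.answers q) :=
    hartleyEntropy_comp_le s (S.answers q) fun c ↦ c r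
  simp only [Fintype.card_pi, Fintype.card_bool, prod_const, card_univ, Fintype.card_fin,
    Nat.cast_pow, Nat.cast_ofNat, Real.log_pow] at hstep
  linarith

theorem hartleyEntropy_answers_le (s : Finset (Fin k)) (q : (r : Fin n) → S.Q r) :
    hartleyEntropy s (S.answers q) ≤ (∑ r, S.d r (q r) : ℕ) * Real.log 2 := by
  refine (hartleyEntropy_le_log_card s (S.answers q)).trans_eq ?_
  simp [prod_pow_eq_pow_sum]

variable (S)

theorem exists_possible_geom_sum_le_hartleyEntropy [NeZero n] [NeZero k] (s : Finset (Fin k)) :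
    ∃ q, S.Possible q ∧
      R * Real.log 2 * ∑ i ∈ range #s, (n : ℝ)⁻¹ ^ i ≤ hartleyEntropy s (S.answers q) := by
  induction s using Finset.induction_on with
  | empty =>
    obtain ⟨q, hq⟩ := (S.D 0).support_nonempty
    exact ⟨q, ⟨0, hq⟩, by simpa using hartleyEntropy_nonneg _ _⟩
  | insert l s hl ih =>
    obtain ⟨q, ⟨l₀, hq⟩, hgeom⟩ := ih
    obtain ⟨r, hr⟩ := exists_hartleyEntropy_div_card_le s (S.answers q)
    obtain ⟨q', hq', hqr⟩ := exists_mem_support_apply_eq hq l r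
    refine ⟨q', ⟨l, hq'⟩, ?_⟩
    have hanswer : hartleyEntropy s (fun X ↦ S.answers q' X r) =
        hartleyEntropy s (fun X ↦ S.answers q X r) := by
      simp only [answers]
      rw [hqr]
    rw [Fintype.card_fin] at hr
    calc R * Real.log 2 * ∑ i ∈ range #(insert l s), (n : ℝ)⁻¹ ^ i
        = R * Real.log 2 + (R * Real.log 2 * ∑ i ∈ range #s, (n : ℝ)⁻¹ ^ i) / n := by
          rw [card_insert_of_notMem hl, geom_sum_succ]
          ring
      _ ≤ R * Real.log 2 + hartleyEntropy s (S.answers q) / n := by gcongr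
      _ ≤ R * Real.log 2 + hartleyEntropy s (fun X ↦ S.answers q' X r) := by
          rw [hanswer]
          gcongr
      _ ≤ hartleyEntropy (insert l s) (S.answers q') :=
          add_hartleyEntropy_answers_apply_le hq' hl r

theorem mul_geom_sum_le_downloadComplexity [NeZero n] :
    R * ∑ i ∈ range k, (n : ℝ)⁻¹ ^ i ≤ S.downloadComplexity := by
  rcases eq_zero_or_neZero k with rfl | _
  · simp
  obtain ⟨q, hq, hgeom⟩ := S.exists_possible_geom_sum_le_hartleyEntropy univ
  rw [card_univ, Fintype.card_fin] at hgeom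
  have hlog : 0 < Real.log 2 := Real.log_pos one_lt_two
  have hbits := hgeom.trans (hartleyEntropy_answers_le univ q)
  calc R * ∑ i ∈ range k, (n : ℝ)⁻¹ ^ i ≤ (∑ r, S.d r (q r) : ℕ) := by
        rw [mul_right_comm] at hbits
        exact le_of_mul_le_mul_right hbits hlog
    _ ≤ S.downloadComplexity := by exact_mod_cast sum_le_downloadComplexity hq

theorem mul_le_downloadComplexity {p m : ℕ} (hk : (p + 1) * m < (p + 1) ^ k)
    (S : PIRScheme (p + 1) k (p * m)) : (p + 1) * m ≤ S.downloadComplexity := by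
  have hbound := S.mul_geom_sum_le_downloadComplexity
  have hgeom : ((p * m : ℕ) : ℝ) * ∑ i ∈ range k, ((p + 1 : ℕ) : ℝ)⁻¹ ^ i =
      (p + 1) * m - (p + 1) * m / (p + 1) ^ k := by
    have hmul := geom_sum_mul_neg ((p + 1 : ℕ) : ℝ)⁻¹ k
    push_cast at hmul ⊢
    have hone : (1 : ℝ) - (p + 1 : ℝ)⁻¹ = p * (p + 1 : ℝ)⁻¹ := by
      field_simp
      ring
    calc (p * m : ℝ) * ∑ i ∈ range k, (p + 1 : ℝ)⁻¹ ^ i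
        = (p + 1) * m * ((∑ i ∈ range k, (p + 1 : ℝ)⁻¹ ^ i) * (1 - (p + 1 : ℝ)⁻¹)) := by
          rw [hone]
          field_simp
      _ = (p + 1) * m - (p + 1) * m / (p + 1) ^ k := by
          rw [hmul, inv_pow]
          ring
  have hfrac : ((p + 1) * m / (p + 1) ^ k : ℝ) < 1 := by
    rw [div_lt_one (by positivity)]
    exact_mod_cast hk
  have hlt : ((p + 1) * m : ℝ) < S.downloadComplexity + 1 := by linarith
  exact Nat.lt_succ_iff.1 (by exact_mod_cast hlt)

end LowerBound

section ShiftScheme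

variable {p m : ℕ}

/-- Concatenation of `a` strings of `b` bits each into one string. It is used both to store a
database and to cut a record into blocks. -/
def flatten (a b : ℕ) : (Fin a → Fin b → Bool) ≃ (Fin (a * b) → Bool) :=
  (Equiv.curry (Fin a) (Fin b) Bool).symm.trans (finProdFinEquiv.arrowCongr (Equiv.refl Bool))

/-- The `p` blocks of `m` bits of a record, preceded by a zero block. -/
def paddedBlock (x : Fin (p * m) → Bool) : Fin (p + 1) → Fin m → Bool :=
  Fin.cons 0 ((flatten p m).symm x)

theorem paddedBlock_succ_sub_zero (x : Fin (p * m) → Bool) (j : Fin p) :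
    paddedBlock x j.succ - paddedBlock x 0 = (flatten p m).symm x j := by
  simp [paddedBlock]

/-- The scheme attaining the minimum download: record `i` contributes its padded block `q i` to a
server's response to `q`, and server `r` is queried at a uniformly random `F` shifted by `r` in
coordinate `l`, modulo `p + 1`. Additions of bits are those of the Boolean ring `Bool`, that is,
exclusive ors. -/
noncomputable def shiftScheme (p m k : ℕ) : PIRScheme (p + 1) k (p * m) where
  Q _ := Fin k → Fin (p + 1)
  fintypeQ _ := inferInstance
  s _ := k * (p * m)
  E _ := flatten k (p * m)
  D l := (PMF.uniformOfFintype (Fin k → Fin (p + 1))).map fun F r ↦ F + Pi.single l r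
  d _ _ := m
  resp _ q w := ∑ i, paddedBlock ((flatten k (p * m)).symm w i) (q i)
  -- Server `0` is not shifted, so server `v - q 0 l` contributes block `v` of record `l`.
  recon l q c := flatten p m fun j ↦ c (j.succ - q 0 l) - c (0 - q 0 l)
  correct X l q hq := by
    obtain ⟨F, -, rfl⟩ := (PMF.mem_support_map_iff _ _ _).1 hq
    rw [← Equiv.eq_symm_apply]
    funext j
    simp only [Equiv.symm_apply_apply]
    rw [sum_apply_add_single_sub (fun i ↦ paddedBlock (X i))]
    simpa using paddedBlock_succ_sub_zero (X l) j
  privacy r l l' := by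
    have huniform (l : Fin k) : ((PMF.uniformOfFintype (Fin k → Fin (p + 1))).map
        fun F (r : Fin (p + 1)) ↦ F + Pi.single l r).map (fun q ↦ q r) =
          PMF.uniformOfFintype (Fin k → Fin (p + 1)) := by
      rw [PMF.map_comp]
      exact map_uniformOfFintype_equiv (Equiv.addRight (Pi.single l r : Fin k → Fin (p + 1)))
    rw [huniform, huniform]

theorem downloadComplexity_shiftScheme_le (p m k : ℕ) :
    (shiftScheme p m k).downloadComplexity ≤ (p + 1) * m :=
  downloadComplexity_le fun _ _ ↦ by simp [shiftScheme]

end ShiftScheme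

end PIRScheme

theorem optimal_download_complexity_general (n k R : ℕ) (hn : 2 ≤ n) (hdvd : (n - 1) ∣ R)
    (hk : n * (R / (n - 1)) < n ^ k) :
    (∀ S : PIRScheme n k R, n * (R / (n - 1)) ≤ S.downloadComplexity) ∧
    (∃ S : PIRScheme n k R, S.downloadComplexity = n * (R / (n - 1))) := by
  obtain ⟨p, rfl⟩ : ∃ p, n = p + 1 := ⟨n - 1, by omega⟩
  obtain ⟨m, rfl⟩ := hdvd
  rw [Nat.add_sub_cancel] at hk ⊢
  rw [Nat.mul_div_cancel_left m (by omega)] at hk ⊢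
  have lower := PIRScheme.mul_le_downloadComplexity hk
  exact ⟨lower, PIRScheme.shiftScheme p m k,
    (PIRScheme.downloadComplexity_shiftScheme_le p m k).antisymm (lower _)⟩

/-- For `n ≥ 2`, `(n-1) ∣ R` and `k ≥ R/(n-1) + 1`, the minimum
download complexity over all `n`-server PIR schemes for `k` records of `R` bits
each is exactly `(n/(n-1))·R`: every such scheme has download complexity at least
`n·(R/(n-1))`, and some scheme attains it. -/
theorem optimal_download_complexity (n k R : ℕ) (hn : 2 ≤ n) (hR : 1 ≤ R)
    (hdvd : (n - 1) ∣ R) (hk : R / (n - 1) + 1 ≤ k) :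
    (∀ S : PIRScheme n k R, n * (R / (n - 1)) ≤ S.downloadComplexity) ∧
    (∃ S : PIRScheme n k R, S.downloadComplexity = n * (R / (n - 1))) := by
  refine optimal_download_complexity_general n k R hn hdvd ?_
  calc n * (R / (n - 1)) < n * n ^ (R / (n - 1)) := by
        gcongr
        exact Nat.lt_pow_self hn
    _ = n ^ (R / (n - 1) + 1) := (pow_succ' n _).symm
    _ ≤ n ^ k := Nat.pow_le_pow_right (by omega) hk
end

section
/- For every real ε > 0 and every integer k ≥ 1, there exists an integer n ≥ 2 such that for every integer R ≥ 1 divisible by n−1 there is an n-server PIR scheme for a database of k records of R bits each whose total storage is nkR bits (a constant multiple, independent of R, of the database size kR) and whose download complexity is at most (1+ε)·R. -/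
open scoped ENNReal

/-! Cut each record into `n - 1` blocks and add a zero block, so that the blocks are indexed by the
cyclic group of order `n`. Every server stores the whole database. To retrieve record `ℓ`, draw
`a` uniformly and ask server `r` for the sum over `j` of block `a j` of record `j`, except that
block `a ℓ + r` is used for `j = ℓ`. Each single query is uniform. As `r` varies, every block of
record `ℓ` is added exactly once to the same unknown sum, which the server that adds the zero block
reveals. Each answer has length `R / (n - 1)`, so `R + R / (n - 1)` bits are downloaded. -/

theorem map_equiv_uniformOfFintype {α β : Type*} [Fintype α] [Nonempty α] [Fintype β] [Nonempty β]
    (e : α ≃ β) : (PMF.uniformOfFintype α).map e = PMF.uniformOfFintype β := by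
  ext b
  rw [PMF.map_apply, tsum_eq_single (e.symm b)]
  · simp [Fintype.card_congr e]
  · intro a ha
    rw [if_neg]
    rintro rfl
    exact ha (e.symm_apply_apply a).symm

theorem PIRScheme.downloadComplexity_le_iff {n k R B : ℕ} {S : PIRScheme n k R} :
    S.downloadComplexity ≤ B ↔ ∀ q, S.Possible q → ∑ r, S.d r (q r) ≤ B := by
  simp [PIRScheme.downloadComplexity]

section ShiftedQueries

variable {ι G M : Type*}

/-- The answer to a query `q`: the sum over all records `j` of block `q j` of record `j`, where
`b j v` is block `v` of record `j`. -/
def blockSum [Fintype ι] [AddCommMonoid M] (b : ι → G → M) (q : ι → G) : M :=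
  ∑ j, b j (q j)

variable [DecidableEq ι]

/-- The query tuple, indexed by the servers `r : G`, by which the scheme retrieves record `ℓ` when
its randomness is `a`: server `r` is asked for `a` shifted by `r` in coordinate `ℓ`. -/
def shiftedQueries [AddZeroClass G] (ℓ : ι) (a : ι → G) (r : G) : ι → G :=
  a + Pi.single ℓ r

@[simp]
theorem shiftedQueries_zero [AddZeroClass G] (ℓ : ι) (a : ι → G) : shiftedQueries ℓ a 0 = a := by
  simp [shiftedQueries]

theorem blockSum_shiftedQueries_sub [Fintype ι] [AddZeroClass G] [AddCommGroup M]
    (b : ι → G → M) (ℓ : ι) (a : ι → G) (u v : G) :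
    blockSum b (shiftedQueries ℓ a u) - blockSum b (shiftedQueries ℓ a v) =
      b ℓ (a ℓ + u) - b ℓ (a ℓ + v) := by
  unfold blockSum
  rw [← Finset.sum_sub_distrib, Fintype.sum_eq_single ℓ]
  · simp [shiftedQueries]
  · intro j hj
    simp [shiftedQueries, Pi.single_eq_of_ne hj]

variable [Fintype ι] [Fintype G]

/-- The distribution of the query tuple by which the scheme retrieves record `ℓ`. -/
noncomputable def queryDistribution [AddZeroClass G] (ℓ : ι) : PMF (G → ι → G) :=
  (PMF.uniformOfFintype (ι → G)).map (shiftedQueries ℓ)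

theorem exists_shiftedQueries_of_mem_support [AddZeroClass G] {ℓ : ι} {q : G → ι → G}
    (hq : q ∈ (queryDistribution ℓ).support) : ∃ a, shiftedQueries ℓ a = q := by
  simpa [queryDistribution] using hq

theorem map_eval_queryDistribution [AddGroup G] (ℓ : ι) (r : G) :
    (queryDistribution ℓ).map (fun q => q r) = PMF.uniformOfFintype (ι → G) := by
  rw [queryDistribution, PMF.map_comp]
  exact map_equiv_uniformOfFintype (Equiv.addRight (Pi.single ℓ r : ι → G))

end ShiftedQueries

/-- The concatenation of `a` strings of length `b`. It serves to store a database as one bit string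
and to assemble a record from its blocks. -/
def concatEquiv (a b : ℕ) : (Fin a → Fin b → Bool) ≃ (Fin (a * b) → Bool) :=
  (Equiv.curry (Fin a) (Fin b) Bool).symm.trans (finProdFinEquiv.arrowCongr (Equiv.refl Bool))

/-- Bit strings of length `m` as vectors over `ZMod 2`, which lets answers be added. -/
def bitVectorEquiv (m : ℕ) : (Fin m → Bool) ≃ (Fin m → ZMod 2) :=
  (Equiv.refl (Fin m)).arrowCongr (finTwoEquiv.symm.trans (ZMod.finEquiv 2).toEquiv)

/-- The blocks of a record of `N * m` bits: block `0` is zero and block `u + 1` is the `u`-th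
substring of length `m`. -/
def paddedBlocks {N m : ℕ} (x : Fin (N * m) → Bool) : Fin (N + 1) → Fin m → ZMod 2 :=
  Fin.cons 0 fun u => bitVectorEquiv m ((concatEquiv N m).symm x u)

theorem concatEquiv_paddedBlocks_sub {N m : ℕ} (x : Fin (N * m) → Bool) :
    concatEquiv N m (fun u =>
      (bitVectorEquiv m).symm (paddedBlocks x u.succ - paddedBlocks x 0)) = x := by
  simp [paddedBlocks]

/-- The scheme with `N + 1` servers, each storing the whole database, that splits records into `N`
blocks of `m` bits. Server `0` receives the unshifted `a`, so block `v` of record `ℓ` is contained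
in the answer of server `v - q 0 ℓ`. -/
noncomputable def blockScheme (N k m : ℕ) : PIRScheme (N + 1) k (N * m) where
  Q _ := Fin k → Fin (N + 1)
  fintypeQ _ := inferInstance
  s _ := k * (N * m)
  E _ := concatEquiv k (N * m)
  D := queryDistribution
  d _ _ := m
  resp _ q stored := (bitVectorEquiv m).symm <|
    blockSum (fun j => paddedBlocks ((concatEquiv k (N * m)).symm stored j)) q
  recon ℓ q c := concatEquiv N m fun u => (bitVectorEquiv m).symm <|
    bitVectorEquiv m (c (u.succ - q 0 ℓ)) - bitVectorEquiv m (c (0 - q 0 ℓ))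
  correct X ℓ q hq := by
    obtain ⟨a, rfl⟩ := exists_shiftedQueries_of_mem_support hq
    simp only [Equiv.symm_apply_apply, Equiv.apply_symm_apply, shiftedQueries_zero,
      blockSum_shiftedQueries_sub, add_sub_cancel, concatEquiv_paddedBlocks_sub]
  privacy r ℓ ℓ' := by
    rw [map_eval_queryDistribution, map_eval_queryDistribution]

theorem sum_storage_blockScheme (N k m : ℕ) :
    ∑ r, (blockScheme N k m).s r = (N + 1) * (k * (N * m)) := by
  simp [blockScheme]

theorem downloadComplexity_blockScheme_le (N k m : ℕ) :
    (blockScheme N k m).downloadComplexity ≤ (N + 1) * m :=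
  PIRScheme.downloadComplexity_le_iff.mpr fun q _ => by simp [blockScheme]

/-- For every `ε > 0` and every `k ≥ 1` there is a number of
servers `n ≥ 2` such that for every record length `R ≥ 1` divisible by `n - 1`
there is an `n`-server PIR scheme for `k` records of `R` bits each with total
storage `nkR` bits and download complexity at most `(1+ε)·R`. -/
theorem linear_storage_near_optimal_download (ε : ℝ) (hε : 0 < ε) (k : ℕ)
    (hk : 1 ≤ k) :
    ∃ n : ℕ, 2 ≤ n ∧ ∀ R : ℕ, 1 ≤ R → (n - 1) ∣ R →
      ∃ S : PIRScheme n k R,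
        (∑ r, S.s r = n * (k * R)) ∧
        (S.downloadComplexity : ℝ) ≤ (1 + ε) * R := by
  obtain ⟨N, hN⟩ := exists_nat_one_div_lt hε
  refine ⟨N + 1 + 1, by omega, ?_⟩
  rintro R - ⟨m, rfl⟩
  refine ⟨blockScheme (N + 1) k m, sum_storage_blockScheme (N + 1) k m, ?_⟩
  calc ((blockScheme (N + 1) k m).downloadComplexity : ℝ)
      ≤ ((N + 1 + 1) * m : ℕ) := by
        exact_mod_cast downloadComplexity_blockScheme_le (N + 1) k m
    _ = (1 + 1 / ((N : ℝ) + 1)) * ((N + 1) * m : ℕ) := by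
        push_cast
        field_simp
    _ ≤ (1 + ε) * ((N + 1) * m : ℕ) := by gcongr
end
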